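/- arXiv:1103.4794 — 3 statements merged into one kernel-verified Lean document; each statement's English description precedes it below -/
import Mathlib

section
/- Let K be a field, A a commutative K-algebra, Λ a finite type, and (V_λ)_{λ∈Λ} a family of K-submodules of A forming an internal direct sum decomposition of A (the V_λ are independent and their sum is all of A), such that V_λ·V_λ ⊆ V_λ for every λ and V_λ·V_μ = 0 for all λ ≠ μ. Let H be a K-submodule of A such that H equals the sum of its intersections with the V_λ, i.e., H = Σ_λ (H ∩ V_λ), and such that the positive submodule-powers of H span A, i.e., ⨆_{n≥1} H^n = A. Then for every λ, the positive powers of H ∩ V_λ span V_λ: ⨆_{n≥1} (H ∩ V_λ)^n = V_λ. -/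
/-- Let `A` be a commutative `K`-algebra with an internal direct sum
decomposition `A = ⊕_λ V_λ` (λ in a finite type) by submodules with
`V_λ · V_λ ⊆ V_λ` and `V_λ · V_μ = 0` for `λ ≠ μ`.  If `H` is a submodule with
`H = Σ_λ (H ⊓ V_λ)` whose positive powers span `A`, then for every `λ` the positive
powers of `H ⊓ V_λ` span `V_λ`. -/
theorem weight_spaces_spanned_by_powers {K A Λ : Type*} [Field K] [CommRing A]
    [Algebra K A] [Finite Λ] [DecidableEq Λ]
    (V : Λ → Submodule K A)
    (hdsum : DirectSum.IsInternal V)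
    (hmul_self : ∀ l, V l * V l ≤ V l)
    (hmul_ne : ∀ l m, l ≠ m → V l * V m = ⊥)
    (H : Submodule K A)
    (hH : H = ⨆ l, H ⊓ V l)
    (hgen : (⨆ n : ℕ, H ^ (n + 1)) = ⊤) :
    ∀ l, (⨆ n : ℕ, (H ⊓ V l) ^ (n + 1)) = V l := by
  have hVpow : ∀ l (n : ℕ), (H ⊓ V l) ^ (n + 1) ≤ V l := by
    intro l n
    induction n with
    | zero => simp
    | succ k ih =>
      rw [pow_succ]
      exact (mul_le_mul' ih inf_le_right).trans (hmul_self l)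
  have hPV : ∀ l, (⨆ n : ℕ, (H ⊓ V l) ^ (n + 1)) ≤ V l := fun l => iSup_le (hVpow l)
  have hHpow : ∀ n : ℕ, H ^ (n + 1) ≤ ⨆ l, (H ⊓ V l) ^ (n + 1) := by
    intro n
    induction n with
    | zero => simpa using hH.le
    | succ k ih =>
      rw [pow_succ]
      refine (mul_le_mul' ih hH.le).trans ?_
      rw [Submodule.iSup_mul]
      refine iSup_le fun l => ?_
      rw [Submodule.mul_iSup]
      refine iSup_le fun m => ?_
      by_cases h : l = m
      · subst h
        rw [← pow_succ]
        exact le_iSup (fun l => (H ⊓ V l) ^ (k + 1 + 1)) l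
      · refine (mul_le_mul' (hVpow l k) inf_le_right).trans ?_
        rw [hmul_ne l m h]
        exact bot_le
  have hsup : (⨆ l, ⨆ n : ℕ, (H ⊓ V l) ^ (n + 1)) = ⊤ := by
    rw [iSup_comm, eq_top_iff, ← hgen]
    exact iSup_mono hHpow
  intro l
  refine le_antisymm (hPV l) ?_
  have hind := hdsum.submodule_iSupIndep l
  have hle : (⊤ : Submodule K A) ≤
      (⨆ n : ℕ, (H ⊓ V l) ^ (n + 1)) ⊔ ⨆ (j) (_ : j ≠ l), V j := by
    rw [← hsup]
    refine iSup_le fun m => ?_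
    by_cases h : m = l
    · subst h
      exact le_sup_left
    · exact ((hPV m).trans (le_iSup₂_of_le m h le_rfl)).trans le_sup_right
  intro x hx
  obtain ⟨y, hy, z, hz, rfl⟩ := Submodule.mem_sup.1 (hle (Submodule.mem_top (x := x)))
  have hzV : z ∈ V l := by
    simpa using (V l).sub_mem hx (hPV l hy)
  have hz0 : z = 0 := Submodule.disjoint_def.1 hind z hzV hz
  simpa [hz0] using hy
end

section
/- Let V be a finite-dimensional complex vector space with an internal direct sum decomposition V = ⊕_{p=0}^{l−1} W_p for some l ≥ 1. Let e, h, f be endomorphisms of V satisfying the sl₂-relations h∘e − e∘h = 2e, h∘f − f∘h = −2f, and e∘f − f∘e = h. Assume e has degree +1 and h has degree 0 with respect to the grading: e(W_p) ⊆ W_{p+1} for p < l−1, e(W_{l−1}) = 0, and h(W_p) ⊆ W_p for every p. Then for every p and every nonzero v ∈ W_p with h(v) = c·v for some c ∈ ℂ, the eigenvalue c is an integer m satisfying p − (l−1) ≤ m ≤ p. -/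
structure Sl2Rel {V : Type*} [AddCommGroup V] [Module ℂ V] (e h f : V →ₗ[ℂ] V) : Prop where
  he : ∀ x, h (e x) = e (h x) + (2 : ℂ) • e x
  hf : ∀ x, h (f x) = f (h x) - (2 : ℂ) • f x
  ef : ∀ x, e (f x) = f (e x) + h x

namespace Sl2Rel

variable {V : Type*} [AddCommGroup V] [Module ℂ V] {e h f : V →ₗ[ℂ] V}

theorem swap (S : Sl2Rel e h f) : Sl2Rel f (-h) e where
  he x := by simp [S.hf x]; abel
  hf x := by simp [S.he x]; abel
  ef x := by simp [S.ef x]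

theorem weight_pow (S : Sl2Rel e h f) {u : V} {c : ℂ} (hu : h u = c • u) (n : ℕ) :
    h ((e ^ n) u) = (c + 2 * n) • (e ^ n) u := by
  induction n with
  | zero => simpa using hu
  | succ n ih =>
    rw [pow_succ', Module.End.mul_apply, S.he, ih, map_smul, ← add_smul]
    congr 1
    push_cast
    ring

theorem comm (S : Sl2Rel e h f) {u : V} {c : ℂ} (hu : h u = c • u) (j : ℕ) :
    (e ^ (j + 1)) (f u) = f ((e ^ (j + 1)) u) + ((j + 1) * (c + j) : ℂ) • (e ^ j) u := by
  induction j with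
  | zero => simp [S.ef, hu]
  | succ j ih =>
    rw [pow_succ', Module.End.mul_apply, ih, map_add, map_smul, S.ef, S.weight_pow hu,
      Module.End.mul_apply, ← Module.End.mul_apply e (e ^ j), ← pow_succ',
      add_assoc, ← add_smul]
    congr 2
    push_cast
    ring

theorem exists_last [FiniteDimensional ℂ V] (S : Sl2Rel e h f) {u : V} {c : ℂ}
    (hu : h u = c • u) (hu0 : u ≠ 0) : ∃ k : ℕ, (e ^ k) u ≠ 0 ∧ (e ^ (k + 1)) u = 0 := by
  by_contra! H
  have hne : ∀ k : ℕ, (e ^ k) u ≠ 0 := by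
    intro k
    induction k with
    | zero => simpa using hu0
    | succ k ih => exact H k ih
  have hli := Module.End.eigenvectors_linearIndependent' h (fun k : ℕ => c + 2 * (k : ℂ))
    (fun a b hab => by simpa using hab) (fun k => (e ^ k) u)
    (fun k => Module.End.hasEigenvector_iff.2
      ⟨Module.End.mem_eigenspace_iff.2 (S.weight_pow hu k), hne k⟩)
  have := hli.finite
  exact not_finite ℕ

theorem weight_int [FiniteDimensional ℂ V] (S : Sl2Rel e h f) {u : V} {c : ℂ}
    (hu : h u = c • u) (hu0 : u ≠ 0) : ∃ m : ℤ, c = m := by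
  obtain ⟨k, hk, hk1⟩ := S.exists_last hu hu0
  have hw := S.weight_pow hu k
  have hw' : (-h) ((e ^ k) u) = (-(c + 2 * k)) • (e ^ k) u := by
    rw [LinearMap.neg_apply, hw, neg_smul]
  obtain ⟨n, hn, hn1⟩ := S.swap.exists_last hw' hk
  have hc := S.swap.comm hw' n
  rw [hn1, ← Module.End.mul_apply e, ← pow_succ', hk1, map_zero, map_zero, zero_add] at hc
  have h0 := (smul_eq_zero.1 hc.symm).resolve_right hn
  have h1 := (mul_eq_zero.1 h0).resolve_left (by exact_mod_cast Nat.succ_ne_zero n)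
  refine ⟨n - 2 * k, ?_⟩
  push_cast
  linear_combination -h1

theorem inj [FiniteDimensional ℂ V] (S : Sl2Rel e h f) (m : ℤ) (j : ℕ) (hj : (j : ℤ) ≤ m)
    (u : V) (hu : h u = (-(m : ℂ)) • u) (hj0 : (e ^ j) u = 0) : u = 0 := by
  induction j generalizing u with
  | zero => simpa using hj0
  | succ i ih =>
    by_contra hu0
    have key : f (e u) = ((i : ℂ) * (i + 1 - m)) • u := by
      rw [← sub_eq_zero]
      apply ih (by push_cast at hj; omega)
      · rw [map_sub, S.hf, S.he, map_smul, hu]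
        simp only [map_smul, map_add]
        module
      · rcases i with _ | i
        · have : e u = 0 := by simpa using hj0
          simp [this]
        · have hw := S.weight_pow hu 1
          rw [pow_one] at hw
          rw [map_sub, S.comm hw, map_smul, ← Module.End.mul_apply _ e, ← pow_succ, hj0,
            ← Module.End.mul_apply _ e, ← pow_succ, map_zero, zero_add, ← sub_smul]
          convert zero_smul ℂ _ using 2
          push_cast
          ring
    have hu' : (-h) u = (m : ℂ) • u := by
      rw [LinearMap.neg_apply, hu, neg_smul, neg_neg]
    obtain ⟨k, hk, hk1⟩ := S.swap.exists_last hu' hu0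
    have hc := S.swap.comm hu' k
    rw [hk1, pow_succ, Module.End.mul_apply, key, map_zero, zero_add, map_smul, ← sub_eq_zero,
      ← sub_smul] at hc
    have h0 := (smul_eq_zero.1 hc).resolve_right hk
    have h1 : (i : ℤ) * (i + 1 - m) - (k + 1) * (m + k) = 0 := by exact_mod_cast h0
    push_cast at hj
    have : (i : ℤ) * (m - i - 1) ≥ 0 := mul_nonneg (by positivity) (by linarith)
    have : (0 : ℤ) < (k + 1) * (m + k) := mul_pos (by positivity) (by omega)
    linarith

theorem surj [FiniteDimensional ℂ V] (S : Sl2Rel e h f) (m : ℕ)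
    (v : V) (hv : h v = (m : ℂ) • v) : ∃ u, (e ^ m) u = v := by
  have hF : ∀ x, h x = (m : ℂ) • x → h ((f ^ m) x) = (-((m : ℤ) : ℂ)) • (f ^ m) x := by
    intro x hx
    have hx' : (-h) x = (-(m : ℂ)) • x := by rw [LinearMap.neg_apply, hx, neg_smul]
    have := S.swap.weight_pow hx' m
    rw [LinearMap.neg_apply, neg_eq_iff_eq_neg, ← neg_smul] at this
    rw [this]
    congr 1
    push_cast
    ring
  have hmap : ∀ x ∈ Module.End.eigenspace h (m : ℂ),
      (e ^ m * f ^ m) x ∈ Module.End.eigenspace h (m : ℂ) := by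
    intro x hx
    rw [Module.End.mem_eigenspace_iff] at hx ⊢
    rw [Module.End.mul_apply, S.weight_pow (hF x hx)]
    congr 1
    push_cast
    ring
  have hinj : Function.Injective ((e ^ m * f ^ m).restrict hmap) := by
    rw [injective_iff_map_eq_zero]
    rintro ⟨x, hx⟩ h0
    have h1 : (e ^ m) ((f ^ m) x) = 0 := congrArg Subtype.val h0
    rw [Module.End.mem_eigenspace_iff] at hx
    have h2 := S.inj m m le_rfl _ (hF x hx) h1
    have h3 := S.swap.inj m m le_rfl x (by simp [hx]) h2
    exact Subtype.ext h3
  obtain ⟨⟨y, hy⟩, hyv⟩ := LinearMap.surjective_of_injective hinj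
    ⟨v, Module.End.mem_eigenspace_iff.2 hv⟩
  exact ⟨(f ^ m) y, congrArg Subtype.val hyv⟩

end Sl2Rel

/-- Let `V = ⊕_{p=0}^{l-1} W_p` be a finite-dimensional graded complex
vector space (encoded by `W : ℕ → Submodule ℂ V` with `W p = ⊥` for `p ≥ l`), and
let `(e, h, f)` be an `sl₂`-triple of endomorphisms with `e` of degree `+1` and `h`
of degree `0`.  Then every `h`-eigenvalue on `W_p` is an integer `m` with
`p - (l-1) ≤ m ≤ p`. -/
theorem sl2_weights_range_on_graded_piece {V : Type*} [AddCommGroup V] [Module ℂ V]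
    [FiniteDimensional ℂ V] (l : ℕ) (hl : 1 ≤ l)
    (W : ℕ → Submodule ℂ V) (hWbot : ∀ p, l ≤ p → W p = ⊥)
    (hW : DirectSum.IsInternal W)
    (e h f : V →ₗ[ℂ] V)
    (he2 : h ∘ₗ e - e ∘ₗ h = (2 : ℂ) • e)
    (hf2 : h ∘ₗ f - f ∘ₗ h = (-2 : ℂ) • f)
    (hef : e ∘ₗ f - f ∘ₗ e = h)
    (hdeg_e : ∀ p, ∀ x ∈ W p, e x ∈ W (p + 1))
    (hdeg_h : ∀ p, ∀ x ∈ W p, h x ∈ W p) :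
    ∀ p, p < l → ∀ v ∈ W p, v ≠ 0 → ∀ c : ℂ, h v = c • v →
      ∃ m : ℤ, c = (m : ℂ) ∧ (p : ℤ) - ((l : ℤ) - 1) ≤ m ∧ m ≤ (p : ℤ) := by
  intro p hp v hv hv0 c hc
  have S : Sl2Rel e h f :=
    { he := fun x => by
        have := LinearMap.congr_fun he2 x
        simp only [LinearMap.sub_apply, LinearMap.comp_apply, LinearMap.smul_apply] at this
        rw [← this]; abel
      hf := fun x => by
        have := LinearMap.congr_fun hf2 x
        simp only [LinearMap.sub_apply, LinearMap.comp_apply, LinearMap.smul_apply,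
          LinearMap.neg_apply, neg_smul] at this
        rw [sub_eq_add_neg, ← this]; abel
      ef := fun x => by
        have := LinearMap.congr_fun hef x
        simp only [LinearMap.sub_apply, LinearMap.comp_apply] at this
        rw [← this]; abel }
  have hpow : ∀ (n q : ℕ), ∀ x ∈ W q, (e ^ n) x ∈ W (q + n) := by
    intro n q x hx
    induction n with
    | zero => simpa using hx
    | succ n ih =>
      rw [pow_succ', Module.End.mul_apply]
      exact hdeg_e _ _ ih
  obtain ⟨m, rfl⟩ := S.weight_int hc hv0
  refine ⟨m, rfl, ?_, ?_⟩
  · by_contra! hlt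
    obtain ⟨n, hn⟩ : ∃ n : ℕ, -m = n := ⟨(-m).toNat, by omega⟩
    apply hv0
    apply S.inj (-m) n hn.ge v (by simpa using hc)
    have := hpow n p v hv
    rwa [hWbot _ (by omega), Submodule.mem_bot] at this
  · by_contra! hlt
    obtain ⟨n, rfl⟩ : ∃ n : ℕ, m = n := ⟨m.toNat, by omega⟩
    obtain ⟨u, hu⟩ := S.surj n v (by simpa using hc)
    have hle : (⊤ : Submodule ℂ V) ≤ (⨆ (j) (_ : j ≠ p), W j).comap (e ^ n) := by
      rw [← hW.submodule_iSup_eq_top]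
      refine iSup_le fun q x hx => ?_
      have hq : q + n ≠ p := by omega
      exact (le_iSup₂_of_le (f := fun (j : ℕ) (_ : j ≠ p) => W j) (q + n) hq le_rfl)
        (hpow n q x hx)
    have h1 : v ∈ ⨆ (j) (_ : j ≠ p), W j := by
      rw [← hu]
      exact hle (Submodule.mem_top (x := u))
    exact hv0 (Submodule.disjoint_def.1 (hW.submodule_iSupIndep p) v hv h1)
end

section
/- Let V be a finite-dimensional complex vector space with an internal direct sum decomposition V = ⊕_{p=0}^{l−1} W_p for some l ≥ 1. Let e, h, f be endomorphisms of V satisfying the sl₂-relations h∘e − e∘h = 2e, h∘f − f∘h = −2f, and e∘f − f∘e = h. Assume e has degree +1 and h has degree 0 with respect to the grading: e(W_p) ⊆ W_{p+1} for p < l−1, e(W_{l−1}) = 0, and h(W_p) ⊆ W_p for every p. Then for every p and every nonzero v ∈ W_p with e(v) = 0 and h(v) = c·v for some c ∈ ℂ, the eigenvalue c is an integer m satisfying 0 ≤ m ≤ p. -/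
/-- In the setting of a finite-dimensional graded complex vector space
`V = ⊕_{p=0}^{l-1} W_p` with an `sl₂`-triple `(e, h, f)`, `e` of degree `+1` and `h`
of degree `0`, every `h`-eigenvalue of a nonzero highest weight vector (`e v = 0`)
lying in `W_p` is an integer `m` with `0 ≤ m ≤ p`. -/
theorem sl2_highest_weights_range_on_graded_piece {V : Type*} [AddCommGroup V]
    [Module ℂ V] [FiniteDimensional ℂ V] (l : ℕ) (hl : 1 ≤ l)
    (W : ℕ → Submodule ℂ V) (hWbot : ∀ p, l ≤ p → W p = ⊥)
    (hW : DirectSum.IsInternal W)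
    (e h f : V →ₗ[ℂ] V)
    (he2 : h ∘ₗ e - e ∘ₗ h = (2 : ℂ) • e)
    (hf2 : h ∘ₗ f - f ∘ₗ h = (-2 : ℂ) • f)
    (hef : e ∘ₗ f - f ∘ₗ e = h)
    (hdeg_e : ∀ p, ∀ x ∈ W p, e x ∈ W (p + 1))
    (hdeg_h : ∀ p, ∀ x ∈ W p, h x ∈ W p) :
    ∀ p, p < l → ∀ v ∈ W p, v ≠ 0 → e v = 0 → ∀ c : ℂ, h v = c • v →
      ∃ m : ℤ, c = (m : ℂ) ∧ 0 ≤ m ∧ m ≤ (p : ℤ) := by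
  intro p hp v hv hv0 hev c hc
  by_cases hh : h = 0
  · refine ⟨0, ?_, le_refl _, by positivity⟩
    rw [hh] at hc
    have h0 : c • v = 0 := by rw [← hc]; rfl
    simpa [hv0] using h0
  letI : LieRing (Module.End ℂ V) := LieRing.ofAssociativeRing
  have t : IsSl2Triple (L := Module.End ℂ V) h e f :=
    { h_ne_zero := hh
      lie_e_f := hef
      lie_h_e_nsmul := by
        have h1 : ⁅(h : Module.End ℂ V), (e : Module.End ℂ V)⁆ = (2 : ℂ) • e := he2
        rw [h1, two_smul, two_nsmul]
      lie_h_f_nsmul := by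
        have h1 : ⁅(h : Module.End ℂ V), (f : Module.End ℂ V)⁆ = (-2 : ℂ) • f := hf2
        rw [h1, neg_smul, two_smul, two_nsmul] }
  have P : t.HasPrimitiveVectorWith v c := ⟨hv0, hc, hev⟩
  obtain ⟨n, hn⟩ := P.exists_nat
  refine ⟨n, by simpa using hn, by positivity, ?_⟩
  by_contra hlt
  have hlt : p < n := by omega
  -- `e ^ i (f ^ i v)` is a nonzero multiple of `v` for `i ≤ n`
  have key : ∀ i : ℕ, i ≤ n → ∃ k : ℂ, k ≠ 0 ∧
      ((e : Module.End ℂ V) ^ i) (((f : Module.End ℂ V) ^ i) v) = k • v := by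
    intro i
    induction i with
    | zero => intro _; exact ⟨1, one_ne_zero, by simp⟩
    | succ i ih =>
      intro hi
      obtain ⟨k, hk, hk'⟩ := ih (by omega)
      have h1 : e (((f : Module.End ℂ V) ^ (i + 1)) v)
          = (((i : ℂ) + 1) * (c - i)) • ((f : Module.End ℂ V) ^ i) v :=
        P.lie_e_pow_succ_toEnd_f i
      refine ⟨(((i : ℂ) + 1) * (c - i)) * k, ?_, ?_⟩
      · refine mul_ne_zero (mul_ne_zero (Nat.cast_add_one_ne_zero i) ?_) hk
        rw [hn, sub_ne_zero]
        exact_mod_cast (by omega : n ≠ i)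
      · rw [pow_succ (e : Module.End ℂ V), Module.End.mul_apply, h1, map_smul, hk', smul_smul]
  obtain ⟨k, hk, hk'⟩ := key n le_rfl
  have hpow : ∀ i q : ℕ, ∀ x ∈ W q, ((e : Module.End ℂ V) ^ i) x ∈ W (q + i) := by
    intro i
    induction i with
    | zero => intro q x hx; simpa using hx
    | succ i ih =>
      intro q x hx
      rw [pow_succ', Module.End.mul_apply]
      exact hdeg_e _ _ (ih q x hx)
  have hrange : ∀ x : V, ((e : Module.End ℂ V) ^ n) x ∈ ⨆ j, ⨆ (_ : j ≠ p), W j := by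
    intro x
    have hx : x ∈ ⨆ j, W j := by rw [hW.submodule_iSup_eq_top]; trivial
    induction hx using Submodule.iSup_induction' with
    | mem q y hy =>
      exact Submodule.mem_iSup_of_mem (q + n)
        (Submodule.mem_iSup_of_mem (by omega) (hpow n q y hy))
    | zero => simp
    | add y z _ _ hy hz => rw [map_add]; exact Submodule.add_mem _ hy hz
  have hd := hW.submodule_iSupIndep p
  have hz := Submodule.disjoint_def.mp hd (k • v) ((W p).smul_mem k hv) (hk' ▸ hrange _)
  exact (smul_ne_zero hk hv0) hz
end
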